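/- arXiv:2208.03253 — 4 statements merged into one kernel-verified Lean document; each statement's English description precedes it below -/
import Mathlib

section
/- Let p : [0,1] × ℝ → ℝ be such that p(ε, y) > 0 for all (ε, y), y ↦ p(ε, y) is measurable for each ε, for each y the map ε ↦ p(ε, y) is continuously differentiable on [0,1] with derivative ṗ(ε, y), and the function (ε, y) ↦ ṗ(ε, y)² / p(ε, y) is measurable and integrable on [0,1] × ℝ. Then ∫_ℝ (√(p(0,y)) − √(p(1,y)))² dy ≤ ∫_0^1 ∫_ℝ ṗ(ε,y)² / p(ε,y) dy dε. -/
open MeasureTheory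

/-!
For fixed `y`, the curve `ε ↦ √(p ε y)` has velocity `ṗ / (2√p)`, whose square is a quarter of the
Fisher information density `ṗ² / p`. The squared displacement of a curve is at most the elapsed time
times the integral of its squared speed (Cauchy–Schwarz), and integrating this in `y` and
exchanging the integrals gives the bound, in fact with the constant `1 / 4`. That the velocity is
square integrable, as Cauchy–Schwarz requires, holds by Fubini for almost every `y`.
-/

theorem sq_integral_le_measureReal_univ_mul {α : Type*} [MeasurableSpace α] {μ : Measure α}
    [IsFiniteMeasure μ] {g : α → ℝ} (hg : MemLp g 2 μ) :
    (∫ x, g x ∂μ) ^ 2 ≤ μ.real Set.univ * ∫ x, g x ^ 2 ∂μ := by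
  rcases eq_zero_or_neZero μ with rfl | _
  · simp
  have jensen : (⨍ x, g x ∂μ) ^ 2 ≤ ⨍ x, g x ^ 2 ∂μ :=
    even_two.convexOn_pow.map_average_le (by fun_prop) isClosed_univ (by simp)
      (hg.integrable one_le_two) hg.integrable_sq
  calc (∫ x, g x ∂μ) ^ 2 = μ.real Set.univ ^ 2 * (⨍ x, g x ∂μ) ^ 2 := by
        rw [← measure_smul_average, smul_eq_mul, mul_pow]
    _ ≤ μ.real Set.univ ^ 2 * ⨍ x, g x ^ 2 ∂μ := by gcongr
    _ = μ.real Set.univ * ∫ x, g x ^ 2 ∂μ := by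
        rw [← measure_smul_average μ (fun x ↦ g x ^ 2), smul_eq_mul]
        ring

theorem aestronglyMeasurable_of_hasDerivAt {𝕜 F : Type*} [NontriviallyNormedField 𝕜]
    [MeasurableSpace 𝕜] [OpensMeasurableSpace 𝕜] [NormedAddCommGroup F] [NormedSpace 𝕜 F]
    [CompleteSpace F] [SecondCountableTopologyEither 𝕜 F] {μ : Measure 𝕜} {s : Set 𝕜}
    (hs : MeasurableSet s) {f f' : 𝕜 → F} (hf : ∀ x ∈ s, HasDerivAt f (f' x) x) :
    AEStronglyMeasurable f' (μ.restrict s) :=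
  (aestronglyMeasurable_deriv f _).congr <|
    (ae_restrict_mem hs).mono fun x hx ↦ (hf x hx).deriv

section Interval

variable {a b : ℝ} {f f' : ℝ → ℝ}

theorem sq_sub_le_mul_setIntegral_sq_deriv (hab : a ≤ b) (hf : ContinuousOn f (Set.Icc a b))
    (hf' : ∀ x ∈ Set.Ioo a b, HasDerivAt f (f' x) x)
    (hint : IntegrableOn (fun x ↦ f' x ^ 2) (Set.Icc a b)) :
    (f b - f a) ^ 2 ≤ (b - a) * ∫ x in Set.Icc a b, f' x ^ 2 := by
  have hmeas : AEStronglyMeasurable f' (volume.restrict (Set.Icc a b)) := by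
    rw [← restrict_Ioo_eq_restrict_Icc]
    exact aestronglyMeasurable_of_hasDerivAt measurableSet_Ioo hf'
  have hL2 : MemLp f' 2 (volume.restrict (Set.Icc a b)) :=
    (memLp_two_iff_integrable_sq hmeas).2 hint
  have ftc : ∫ x in Set.Icc a b, f' x = f b - f a := by
    rw [integral_Icc_eq_integral_Ioc, ← intervalIntegral.integral_of_le hab]
    exact intervalIntegral.integral_eq_sub_of_hasDerivAt_of_le hab hf hf' <|
      (intervalIntegrable_iff_integrableOn_Icc_of_le hab).2 (hL2.integrable one_le_two)
  simpa [ftc, hab] using sq_integral_le_measureReal_univ_mul hL2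

theorem sq_div_two_mul_sqrt {x : ℝ} (hx : 0 ≤ x) (v : ℝ) :
    (v / (2 * √x)) ^ 2 = v ^ 2 / x / 4 := by
  rw [div_pow, mul_pow, Real.sq_sqrt hx, div_div]
  ring

theorem sq_sqrt_sub_sqrt_le_mul_setIntegral (hab : a ≤ b) (hf : ContinuousOn f (Set.Icc a b))
    (hpos : ∀ x ∈ Set.Ioo a b, 0 < f x) (hf' : ∀ x ∈ Set.Ioo a b, HasDerivAt f (f' x) x)
    (hint : IntegrableOn (fun x ↦ f' x ^ 2 / f x) (Set.Icc a b)) :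
    (√(f a) - √(f b)) ^ 2 ≤ (b - a) / 4 * ∫ x in Set.Icc a b, f' x ^ 2 / f x := by
  have speed_sq : (fun x ↦ (f' x / (2 * √(f x))) ^ 2)
      =ᵐ[volume.restrict (Set.Icc a b)] fun x ↦ f' x ^ 2 / f x / 4 := by
    rw [← restrict_Ioo_eq_restrict_Icc]
    exact (ae_restrict_mem measurableSet_Ioo).mono fun x hx ↦
      sq_div_two_mul_sqrt (hpos x hx).le (f' x)
  calc (√(f a) - √(f b)) ^ 2 = (√(f b) - √(f a)) ^ 2 := sub_sq_comm _ _
    _ ≤ (b - a) * ∫ x in Set.Icc a b, (f' x / (2 * √(f x))) ^ 2 :=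
        sq_sub_le_mul_setIntegral_sq_deriv hab hf.sqrt
          (fun x hx ↦ (hf' x hx).sqrt (hpos x hx).ne') ((hint.div_const 4).congr speed_sq.symm)
    _ = (b - a) / 4 * ∫ x in Set.Icc a b, f' x ^ 2 / f x := by
        rw [integral_congr_ae speed_sq, integral_div]
        ring

end Interval

theorem stmt2_general {Y : Type*} [MeasurableSpace Y] {ν : Measure Y} [SFinite ν]
    {a b : ℝ} (hab : a ≤ b) {p pdot : ℝ → Y → ℝ}
    (hpos : ∀ y, ∀ ε ∈ Set.Ioo a b, 0 < p ε y)
    (hmeas_left : AEStronglyMeasurable (p a) ν) (hmeas_right : AEStronglyMeasurable (p b) ν)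
    (hcont : ∀ y, ContinuousOn (fun ε ↦ p ε y) (Set.Icc a b))
    (hderiv : ∀ y, ∀ ε ∈ Set.Ioo a b, HasDerivAt (fun e ↦ p e y) (pdot ε y) ε)
    (hint : IntegrableOn (fun q : ℝ × Y ↦ pdot q.1 q.2 ^ 2 / p q.1 q.2)
      (Set.Icc a b ×ˢ Set.univ) (volume.prod ν)) :
    Integrable (fun y ↦ (√(p a y) - √(p b y)) ^ 2) ν ∧
      ∫ y, (√(p a y) - √(p b y)) ^ 2 ∂ν
        ≤ (b - a) / 4 * ∫ ε in Set.Icc a b, ∫ y, pdot ε y ^ 2 / p ε y ∂ν := by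
  rw [IntegrableOn, ← Measure.prod_restrict, Measure.restrict_univ] at hint
  have bound : ∀ᵐ y ∂ν, (√(p a y) - √(p b y)) ^ 2
      ≤ (b - a) / 4 * ∫ ε in Set.Icc a b, pdot ε y ^ 2 / p ε y :=
    hint.prod_left_ae.mono fun y hy ↦
      sq_sqrt_sub_sqrt_le_mul_setIntegral hab (hcont y) (hpos y) (hderiv y) hy
  have bound_integrable := hint.integral_prod_right.const_mul ((b - a) / 4)
  have hellinger_integrable : Integrable (fun y ↦ (√(p a y) - √(p b y)) ^ 2) ν := by
    refine bound_integrable.mono' ?_ (bound.mono fun y hy ↦ ?_)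
    · exact ((Real.continuous_sqrt.comp_aestronglyMeasurable hmeas_left).sub
        (Real.continuous_sqrt.comp_aestronglyMeasurable hmeas_right)).pow 2
    · rwa [Real.norm_of_nonneg (sq_nonneg _)]
  refine ⟨hellinger_integrable, ?_⟩
  rw [integral_integral_swap hint, ← integral_const_mul]
  exact integral_mono_ae hellinger_integrable bound_integrable bound

/-- Interpolation bound: the squared Hellinger distance between the endpoints of a
smooth one-parameter family of positive densities is dominated by the integrated
Fisher information of the family. -/
theorem stmt2
    (p pdot : ℝ → ℝ → ℝ)
    (hpos : ∀ ε ∈ Set.Icc (0 : ℝ) 1, ∀ y : ℝ, 0 < p ε y)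
    (hmeas : ∀ ε ∈ Set.Icc (0 : ℝ) 1, Measurable (fun y => p ε y))
    (hderiv : ∀ y : ℝ, ∀ ε ∈ Set.Icc (0 : ℝ) 1,
      HasDerivWithinAt (fun e => p e y) (pdot ε y) (Set.Icc (0 : ℝ) 1) ε)
    (hcont : ∀ y : ℝ, ContinuousOn (fun e => pdot e y) (Set.Icc (0 : ℝ) 1))
    (hint : IntegrableOn (fun q : ℝ × ℝ => (pdot q.1 q.2) ^ 2 / p q.1 q.2)
      (Set.Icc (0 : ℝ) 1 ×ˢ (Set.univ : Set ℝ)) volume) :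
    ∫ y : ℝ, (Real.sqrt (p 0 y) - Real.sqrt (p 1 y)) ^ 2
      ≤ ∫ ε in Set.Icc (0 : ℝ) 1, ∫ y : ℝ, (pdot ε y) ^ 2 / p ε y := by
  have hellinger_nonneg : 0 ≤ ∫ y : ℝ, (√(p 0 y) - √(p 1 y)) ^ 2 :=
    integral_nonneg fun y ↦ sq_nonneg _
  have hellinger_le := (stmt2_general zero_le_one
    (fun y ε hε ↦ hpos ε (Set.Ioo_subset_Icc_self hε) y)
    (hmeas 0 (by simp)).aestronglyMeasurable (hmeas 1 (by simp)).aestronglyMeasurable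
    (fun y ε hε ↦ (hderiv y ε hε).continuousWithinAt)
    (fun y ε hε ↦ (hderiv y ε (Set.Ioo_subset_Icc_self hε)).hasDerivAt (Icc_mem_nhds hε.1 hε.2))
    hint).2
  linarith
end

section
/- In the perturbed stationary densities setup, the normalizing constants satisfy |1/c̃ − 1/c| ≤ 20 h / M. -/
open MeasureTheory

/-!
Since `b` vanishes near `x*`, the weight `e^{2B}` equals `1` on the support of `ψ`, so the integrals
`1/c̃` and `1/c` differ by at most the length `2h` of the window `[x* - h, x* + h]` times the
largest deviation of `(1 + ψ/M)⁻²` from `1`. As `|ψ| ≤ 1`, that deviation is at most its value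
`(1 - 1/M)⁻² - 1` at `ψ = -1`; this is convex in `1/M`, hence bounded on `[0, 1/2]` by its chord,
which is `6/M`.
-/

theorem abs_inv_one_add_sq_sub_one_le {t ε : ℝ} (ht : |t| ≤ ε) (hε : ε < 1) :
    |(1 + t)⁻¹ ^ 2 - 1| ≤ (1 - ε)⁻¹ ^ 2 - 1 := by
  obtain ⟨hεt, htε⟩ := abs_le.mp ht
  have : 0 < 1 - ε := by linarith
  have : 0 < 1 + ε := by linarith
  have : 0 < 1 + t := by linarith
  have upper : (1 + t)⁻¹ ^ 2 ≤ (1 - ε)⁻¹ ^ 2 := by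
    gcongr
    linarith
  have lower : (1 + ε)⁻¹ ^ 2 ≤ (1 + t)⁻¹ ^ 2 := by gcongr
  have one_le : 1 ≤ (1 - ε)⁻¹ * (1 + ε)⁻¹ := by
    rw [← mul_inv]
    exact (one_le_inv₀ (by positivity)).mpr (by nlinarith)
  have two_le : 2 ≤ (1 - ε)⁻¹ ^ 2 + (1 + ε)⁻¹ ^ 2 := by
    linarith [two_mul_le_add_sq (1 - ε)⁻¹ (1 + ε)⁻¹]
  exact abs_le.mpr ⟨by linarith, by linarith⟩

theorem inv_one_sub_sq_sub_one_le_six_mul {ε : ℝ} (hε₀ : 0 ≤ ε) (hε : ε ≤ 1 / 2) :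
    (1 - ε)⁻¹ ^ 2 - 1 ≤ 6 * ε := by
  have : 0 < 1 - ε := by linarith
  have chord_gap : 0 ≤ ε * (1 - 2 * ε) * (4 - 3 * ε) :=
    mul_nonneg (mul_nonneg hε₀ (by linarith)) (by linarith)
  rw [sub_le_iff_le_add, inv_pow, inv_le_iff_one_le_mul₀ (by positivity)]
  linarith

theorem intervalIntegral_eq_zero_of_eqOn_zero {E : Type*} [NormedAddCommGroup E]
    [NormedSpace ℝ E] {μ : Measure ℝ} {S : Set ℝ} [S.OrdConnected] {f : ℝ → E}
    (hf : Set.EqOn f 0 S) {a x : ℝ} (ha : a ∈ S) (hx : x ∈ S) :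
    ∫ y in a..x, f y ∂μ = 0 := by
  rw [intervalIntegral.integral_congr (hf.mono (Set.OrdConnected.uIcc_subset ‹_› ha hx))]
  exact intervalIntegral.integral_zero

theorem norm_integral_smul_sub_integral_le {X 𝕜 E : Type*} [MeasurableSpace X] {μ : Measure X}
    [NormedField 𝕜] [NormedAddCommGroup E] [NormedSpace ℝ E] [NormedSpace 𝕜 E]
    {s : Set X} {C : ℝ} {g : X → 𝕜} {w : X → E} (hg : AEStronglyMeasurable g μ)
    (hgC : ∀ᵐ x ∂μ, ‖g x - 1‖ ≤ C) (hgs : Set.EqOn g 1 sᶜ) (hw : Integrable w μ) :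
    ‖(∫ x, g x • w x ∂μ) - ∫ x, w x ∂μ‖ ≤ C * ∫ x in s, ‖w x‖ ∂μ := by
  have hdiff : Integrable (fun x ↦ (g x - 1) • w x) μ :=
    hw.bdd_smul C (hg.sub aestronglyMeasurable_const) hgC
  have hgw : Integrable (fun x ↦ g x • w x) μ := by
    simpa only [Pi.add_def, sub_smul, one_smul, sub_add_cancel] using hdiff.add hw
  have hvanish : ∀ x, x ∉ s → (g x - 1) • w x = 0 := fun x hx ↦ by
    rw [hgs hx, Pi.one_apply, sub_self, zero_smul]
  calc ‖(∫ x, g x • w x ∂μ) - ∫ x, w x ∂μ‖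
      = ‖∫ x in s, (g x - 1) • w x ∂μ‖ := by
        rw [setIntegral_eq_integral_of_forall_compl_eq_zero hvanish, ← integral_sub hgw hw]
        simp only [sub_smul, one_smul]
    _ ≤ ∫ x in s, C * ‖w x‖ ∂μ := by
        refine norm_integral_le_of_norm_le (hw.norm.integrableOn.const_mul C) ?_
        filter_upwards [ae_restrict_of_ae hgC] with x hx
        rw [norm_smul]
        gcongr
    _ = C * ∫ x in s, ‖w x‖ ∂μ := integral_const_mul C _

theorem stmt4_general {xstar h M : ℝ} (hh : 0 ≤ h) (hM : 1 < M) {w ψ : ℝ → ℝ}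
    (hw : Integrable w) (hw1 : ∀ x ∈ Set.Icc (xstar - h) (xstar + h), |w x| ≤ 1)
    (hψm : AEStronglyMeasurable ψ)
    (hψsupp : Function.support ψ ⊆ Set.Icc (xstar - h) (xstar + h)) (hψ1 : ∀ x, |ψ x| ≤ 1) :
    |(∫ x, (1 + ψ x / M)⁻¹ ^ 2 * w x) - ∫ x, w x| ≤ ((1 - M⁻¹)⁻¹ ^ 2 - 1) * (2 * h) := by
  have hM0 : 0 < M := by linarith
  have hdev (x : ℝ) : ‖(1 + ψ x / M)⁻¹ ^ 2 - 1‖ ≤ (1 - M⁻¹)⁻¹ ^ 2 - 1 := by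
    refine abs_inv_one_add_sq_sub_one_le ?_ (inv_lt_one_of_one_lt₀ hM)
    rw [abs_div, abs_of_pos hM0, ← one_div]
    gcongr
    exact hψ1 x
  have hmeas : AEStronglyMeasurable (fun x ↦ (1 + ψ x / M)⁻¹ ^ 2) :=
    ((hψm.aemeasurable.div_const M).const_add 1).inv.pow_const 2 |>.aestronglyMeasurable
  have hone : Set.EqOn (fun x ↦ (1 + ψ x / M)⁻¹ ^ 2) 1
      (Set.Icc (xstar - h) (xstar + h))ᶜ := fun x hx ↦ by
    have : ψ x = 0 := Function.notMem_support.mp fun hmem ↦ hx (hψsupp hmem)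
    simp [this]
  have hmass : ∫ x in Set.Icc (xstar - h) (xstar + h), |w x| ≤ 2 * h := by
    calc ∫ x in Set.Icc (xstar - h) (xstar + h), |w x|
        ≤ ∫ _ in Set.Icc (xstar - h) (xstar + h), (1 : ℝ) :=
          setIntegral_mono_on hw.abs.integrableOn (by simp) measurableSet_Icc hw1
      _ = 2 * h := by
          rw [setIntegral_const, Real.volume_real_Icc_of_le (by linarith)]
          simp only [smul_eq_mul]
          ring
  exact (norm_integral_smul_sub_integral_le hmeas (.of_forall hdev) hone hw).trans
    (mul_le_mul_of_nonneg_left hmass ((norm_nonneg _).trans (hdev xstar)))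

/-- In the perturbed stationary densities setup, the normalizing constants satisfy
`|1/c̃ − 1/c| ≤ 20 h / M`. -/
theorem stmt4
    (xstar A h M : ℝ) (hA : 1 ≤ A) (hh0 : 0 < h) (hh1 : h ≤ 1) (hM : 2 ≤ M)
    (b : ℝ → ℝ) (hbm : Measurable b)
    (hb0 : ∀ x ∈ Set.Icc (xstar - A) (xstar + A), b x = 0)
    (Bf : ℝ → ℝ) (hBf : ∀ x, Bf x = ∫ y in xstar..x, b y)
    (c : ℝ) (hc : 0 < c)
    (hint : Integrable (fun x => Real.exp (2 * Bf x)) volume)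
    (hc1 : ∫ x : ℝ, Real.exp (2 * Bf x) = 1 / c)
    (ψ : ℝ → ℝ) (hψm : Measurable ψ)
    (hψsupp : Function.support ψ ⊆ Set.Icc (xstar - h) (xstar + h))
    (hψ1 : ∀ x, |ψ x| ≤ 1) (hψx : ψ xstar = 1)
    (ctil : ℝ) (hctil : 0 < ctil)
    (hctil1 : 1 / ctil = ∫ x : ℝ, (1 + ψ x / M)⁻¹ ^ 2 * Real.exp (2 * Bf x)) :
    |1 / ctil - 1 / c| ≤ 20 * h / M := by
  have hB (x) (hx : x ∈ Set.Icc (xstar - h) (xstar + h)) : Bf x = 0 :=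
    (hBf x).trans <| intervalIntegral_eq_zero_of_eqOn_zero hb0
      ⟨by linarith, by linarith⟩ ⟨by linarith [hx.1], by linarith [hx.2]⟩
  have hMinv : M⁻¹ ≤ 1 / 2 := by simpa using inv_anti₀ two_pos hM
  rw [hctil1, ← hc1]
  refine (stmt4_general hh0.le (by linarith) hint (fun x hx ↦ by simp [hB x hx])
    hψm.aestronglyMeasurable hψsupp hψ1).trans ?_
  calc ((1 - M⁻¹)⁻¹ ^ 2 - 1) * (2 * h)
      ≤ 6 * M⁻¹ * (2 * h) := by
        gcongr
        exact inv_one_sub_sq_sub_one_le_six_mul (by positivity) hMinv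
    _ = 12 * h / M := by ring
    _ ≤ 20 * h / M := by gcongr; norm_num
end

section
/- In the perturbed stationary densities setup, assume additionally that there are constants 0 < c₀ ≤ C₀ and C₁ ≥ 0 with c₀ ≤ c ≤ C₀, c̃ ≤ C₀ and |c̃ − c| ≤ C₁ h / M. Then the squared Hellinger distance between the two densities satisfies ∫_ℝ (√(π(x)) − √(π̃(x)))² dx ≤ C h / M², where C depends only on c₀, C₀ and C₁. -/
open MeasureTheory

/-!
Insert the intermediate density `c̃ w`, where `w = exp (2 B)`, between `π = c w` and
`π̃ = c̃ (1 + ψ / M)⁻² w`, and use that the Hellinger distance is the `L²` distance of square roots.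
The first leg costs `(√c - √c̃)² ∫ w ≤ (c - c̃)² / c² = O(h² / M²)`. On the second leg only the
perturbation is felt: the square roots differ by the factor `1 - (1 + ψ / M)⁻¹ = O(1 / M)`,
supported on an interval which has `w`-mass `2 h` because `B` vanishes there.
-/

section Hellinger

variable {X : Type*} [MeasurableSpace X] {μ : Measure X}

/-- The squared Hellinger distance of two densities `f` and `g` with respect to `μ`, without the
normalizing factor `1 / 2`; it compares `π` with `π̃`. As a Bochner integral it is meaningful
for integrable `f` and `g`. -/
noncomputable def hellingerSq (μ : Measure X) (f g : X → ℝ) : ℝ :=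
  ∫ x, (√(f x) - √(g x)) ^ 2 ∂μ

theorem sq_sqrt_sub_sqrt_le_abs_add_abs (a b : ℝ) : (√a - √b) ^ 2 ≤ |a| + |b| := by
  have sq_sqrt_le (t : ℝ) : √t ^ 2 ≤ |t| :=
    (pow_le_pow_left₀ t.sqrt_nonneg (Real.sqrt_le_sqrt (le_abs_self t)) 2).trans_eq
      (Real.sq_sqrt (abs_nonneg t))
  nlinarith [sq_sqrt_le a, sq_sqrt_le b, mul_nonneg a.sqrt_nonneg b.sqrt_nonneg]

theorem sq_sqrt_sub_sqrt_le_sq_sub_div {a b : ℝ} (ha : 0 < a) (hb : 0 ≤ b) :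
    (√a - √b) ^ 2 ≤ (a - b) ^ 2 / a := by
  have conjugate : a - b = (√a - √b) * (√a + √b) := by
    linear_combination Real.sq_sqrt hb - Real.sq_sqrt ha.le
  have le_sq : a ≤ (√a + √b) ^ 2 := by
    nlinarith [Real.sq_sqrt ha.le, mul_nonneg a.sqrt_nonneg b.sqrt_nonneg, sq_nonneg (√b)]
  rw [le_div_iff₀ ha, conjugate, mul_pow]
  gcongr

theorem integrable_sq_sqrt_sub_sqrt {f g : X → ℝ} (hf : Integrable f μ) (hg : Integrable g μ) :
    Integrable (fun x => (√(f x) - √(g x)) ^ 2) μ := by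
  refine (hf.abs.add hg.abs).mono' ?_ (.of_forall fun x => ?_)
  · exact ((Real.continuous_sqrt.comp_aestronglyMeasurable hf.aestronglyMeasurable).sub
      (Real.continuous_sqrt.comp_aestronglyMeasurable hg.aestronglyMeasurable)).pow 2
  · rw [Real.norm_of_nonneg (sq_nonneg _)]
    exact sq_sqrt_sub_sqrt_le_abs_add_abs _ _

theorem hellingerSq_le_two_mul_add {f g k : X → ℝ} (hf : Integrable f μ) (hg : Integrable g μ)
    (hk : Integrable k μ) :
    hellingerSq μ f k ≤ 2 * (hellingerSq μ f g + hellingerSq μ g k) := by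
  have hfg := integrable_sq_sqrt_sub_sqrt hf hg
  have hgk := integrable_sq_sqrt_sub_sqrt hg hk
  simp only [hellingerSq]
  rw [← integral_add hfg hgk, ← integral_const_mul]
  refine integral_mono (integrable_sq_sqrt_sub_sqrt hf hk) ((hfg.add hgk).const_mul 2) fun x => ?_
  linarith [add_sq_le (a := √(f x) - √(g x)) (b := √(g x) - √(k x)),
    congrArg (· ^ 2) (sub_add_sub_cancel √(f x) √(g x) √(k x))]

theorem hellingerSq_const_mul {a : ℝ} (ha : 0 ≤ a) (f g : X → ℝ) :
    hellingerSq μ (fun x => a * f x) (fun x => a * g x) = a * hellingerSq μ f g := by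
  simp only [hellingerSq, Real.sqrt_mul ha, ← mul_sub, mul_pow, Real.sq_sqrt ha,
    integral_const_mul]

theorem hellingerSq_sq_mul {u v w : X → ℝ} (hu : ∀ x, 0 ≤ u x) (hv : ∀ x, 0 ≤ v x)
    (hw : 0 ≤ᵐ[μ] w) :
    hellingerSq μ (fun x => u x ^ 2 * w x) (fun x => v x ^ 2 * w x) =
      ∫ x, (u x - v x) ^ 2 * w x ∂μ := by
  refine integral_congr_ae ?_
  filter_upwards [hw] with x hwx
  rw [Real.sqrt_mul (sq_nonneg _), Real.sqrt_mul (sq_nonneg _), Real.sqrt_sq (hu x),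
    Real.sqrt_sq (hv x), ← sub_mul, mul_pow, Real.sq_sqrt hwx]

theorem hellingerSq_const_mul_const_mul_le {w : X → ℝ} (hw : 0 ≤ᵐ[μ] w) {a b : ℝ} (ha : 0 < a)
    (hb : 0 ≤ b) :
    hellingerSq μ (fun x => a * w x) (fun x => b * w x) ≤ (a - b) ^ 2 / a * ∫ x, w x ∂μ := by
  have scaling := hellingerSq_sq_mul (μ := μ) (w := w) (u := fun _ => √a) (v := fun _ => √b)
    (fun _ => a.sqrt_nonneg) (fun _ => b.sqrt_nonneg) hw
  simp only [Real.sq_sqrt ha.le, Real.sq_sqrt hb, integral_const_mul] at scaling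
  rw [scaling]
  exact mul_le_mul_of_nonneg_right (sq_sqrt_sub_sqrt_le_sq_sub_div ha hb)
    (integral_nonneg_of_ae hw)

end Hellinger

section Perturbation

theorem inv_one_add_mem_Icc {t : ℝ} (ht : |t| ≤ 1 / 2) : (1 + t)⁻¹ ∈ Set.Icc 0 2 := by
  have half_le : 1 / 2 ≤ 1 + t := by linarith [neg_le_of_abs_le ht]
  exact ⟨by positivity, inv_le_of_inv_le₀ two_pos (by linarith)⟩

theorem sq_one_sub_inv_one_add_le {t : ℝ} (ht : |t| ≤ 1 / 2) :
    (1 - (1 + t)⁻¹) ^ 2 ≤ 4 * t ^ 2 := by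
  have one_add_ne_zero : 1 + t ≠ 0 := by linarith [neg_le_of_abs_le ht]
  have factor : 1 - (1 + t)⁻¹ = t * (1 + t)⁻¹ := by field_simp; ring
  have inv_sq_le : (1 + t)⁻¹ ^ 2 ≤ 2 ^ 2 :=
    pow_le_pow_left₀ (inv_one_add_mem_Icc ht).1 (inv_one_add_mem_Icc ht).2 2
  rw [factor, mul_pow]
  nlinarith [sq_nonneg t]

variable {X : Type*} [MeasurableSpace X] {μ : Measure X} {w φ ψ : X → ℝ}

theorem integrable_inv_one_add_sq_mul (hwint : Integrable w μ) (hφm : AEStronglyMeasurable φ μ)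
    (hφ : ∀ x, |φ x| ≤ 1 / 2) : Integrable (fun x => (1 + φ x)⁻¹ ^ 2 * w x) μ := by
  refine hwint.bdd_mul (c := 2 ^ 2) ?_ (.of_forall fun x => ?_)
  · exact ((hφm.aemeasurable.const_add 1).inv.pow_const 2).aestronglyMeasurable
  · rw [Real.norm_of_nonneg (sq_nonneg _)]
    exact pow_le_pow_left₀ (inv_one_add_mem_Icc (hφ x)).1 (inv_one_add_mem_Icc (hφ x)).2 2

theorem hellingerSq_inv_one_add_sq_mul_le (hw : 0 ≤ᵐ[μ] w) (hwint : Integrable w μ)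
    (hφm : AEStronglyMeasurable φ μ) (hφ : ∀ x, |φ x| ≤ 1 / 2) :
    hellingerSq μ w (fun x => (1 + φ x)⁻¹ ^ 2 * w x) ≤ 4 * ∫ x, φ x ^ 2 * w x ∂μ := by
  have eq_integral := hellingerSq_sq_mul (μ := μ) (u := fun _ => 1)
    (fun _ => zero_le_one) (fun x => (inv_one_add_mem_Icc (hφ x)).1) hw
  simp only [one_pow, one_mul] at eq_integral
  have hφw : Integrable (fun x => φ x ^ 2 * w x) μ := by
    refine hwint.bdd_mul (c := (1 / 2) ^ 2) (hφm.pow 2) (.of_forall fun x => ?_)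
    rw [norm_pow]
    exact pow_le_pow_left₀ (norm_nonneg _) (hφ x) 2
  rw [eq_integral, ← integral_const_mul]
  refine integral_mono_of_nonneg ?_ (hφw.const_mul 4) ?_
  · filter_upwards [hw] with x hwx using mul_nonneg (sq_nonneg _) hwx
  · filter_upwards [hw] with x hwx
    rw [← mul_assoc]
    exact mul_le_mul_of_nonneg_right (sq_one_sub_inv_one_add_le (hφ x)) hwx

theorem hellingerSq_const_mul_perturbation_le (hw : 0 ≤ᵐ[μ] w) (hwint : Integrable w μ)
    (hφm : AEStronglyMeasurable φ μ) (hφ : ∀ x, |φ x| ≤ 1 / 2) {a b : ℝ} (ha : 0 < a)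
    (hb : 0 ≤ b) :
    hellingerSq μ (fun x => a * w x) (fun x => b * (1 + φ x)⁻¹ ^ 2 * w x) ≤
      2 * ((a - b) ^ 2 / a * (∫ x, w x ∂μ) + b * (4 * ∫ x, φ x ^ 2 * w x ∂μ)) := by
  simp only [mul_assoc b]
  calc
    _ ≤ 2 * (hellingerSq μ (fun x => a * w x) (fun x => b * w x) +
          hellingerSq μ (fun x => b * w x) (fun x => b * ((1 + φ x)⁻¹ ^ 2 * w x))) :=
      hellingerSq_le_two_mul_add (hwint.const_mul a) (hwint.const_mul b)
        ((integrable_inv_one_add_sq_mul hwint hφm hφ).const_mul b)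
    _ ≤ _ := by
      rw [hellingerSq_const_mul hb]
      gcongr
      · exact hellingerSq_const_mul_const_mul_le hw ha hb
      · exact hellingerSq_inv_one_add_sq_mul_le hw hwint hφm hφ

theorem integral_sq_mul_le_setIntegral (hw : 0 ≤ᵐ[μ] w) (hwint : Integrable w μ) {S : Set X}
    (hψS : Function.support ψ ⊆ S) (hψ : ∀ x, |ψ x| ≤ 1) :
    ∫ x, ψ x ^ 2 * w x ∂μ ≤ ∫ x in S, w x ∂μ := by
  have vanishes_off : ∀ x, x ∉ S → ψ x ^ 2 * w x = 0 := fun x hx => by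
    simp [Function.notMem_support.1 (mt (@hψS x) hx)]
  rw [← setIntegral_eq_integral_of_forall_compl_eq_zero vanishes_off]
  refine integral_mono_of_nonneg ?_ hwint.integrableOn ?_
  · filter_upwards [ae_restrict_of_ae hw] with x hwx using mul_nonneg (sq_nonneg _) hwx
  · filter_upwards [ae_restrict_of_ae hw] with x hwx
    exact mul_le_of_le_one_left hwx ((sq_le_one_iff_abs_le_one _).2 (hψ x))

theorem stmt6_general {c₀ C₀ C₁ K h M : ℝ} (hc₀ : 0 < c₀) (hh₀ : 0 ≤ h) (hh₁ : h ≤ 1)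
    (hM : 2 ≤ M) (hw : 0 ≤ᵐ[μ] w) (hwint : Integrable w μ) {c : ℝ} (hc : ∫ x, w x ∂μ = 1 / c)
    {S : Set X} (hS : ∫ x in S, w x ∂μ ≤ K * h) (hψm : AEStronglyMeasurable ψ μ)
    (hψS : Function.support ψ ⊆ S) (hψ : ∀ x, |ψ x| ≤ 1) {ctil : ℝ} (hctil : 0 ≤ ctil)
    (hc₀c : c₀ ≤ c) (hctilC₀ : ctil ≤ C₀) (hdiff : |ctil - c| ≤ C₁ * h / M) :
    hellingerSq μ (fun x => c * w x) (fun x => ctil * (1 + ψ x / M)⁻¹ ^ 2 * w x) ≤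
      (2 * C₁ ^ 2 / c₀ ^ 2 + 8 * C₀ * K) * h / M ^ 2 := by
  have hM₀ : 0 < M := two_pos.trans_le hM
  have hψM : ∀ x, |ψ x / M| ≤ 1 / 2 := fun x => by
    rw [abs_div, abs_of_pos hM₀]
    exact div_le_div₀ zero_le_one (hψ x) two_pos hM
  have diff_sq_le : (c - ctil) ^ 2 ≤ C₁ ^ 2 * h / M ^ 2 := calc
    (c - ctil) ^ 2 ≤ (C₁ * h / M) ^ 2 := by
      rw [← sq_abs, abs_sub_comm]
      gcongr
    _ = C₁ ^ 2 * h ^ 2 / M ^ 2 := by ring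
    _ ≤ C₁ ^ 2 * h / M ^ 2 := by
      gcongr
      exact pow_le_of_le_one hh₀ hh₁ two_ne_zero
  have perturbation_le : ctil * ∫ x, ψ x ^ 2 * w x ∂μ ≤ C₀ * (K * h) :=
    mul_le_mul hctilC₀ ((integral_sq_mul_le_setIntegral hw hwint hψS hψ).trans hS)
      (integral_nonneg_of_ae (hw.mono fun x hwx => mul_nonneg (sq_nonneg _) hwx))
      (hctil.trans hctilC₀)
  calc
    _ ≤ 2 * ((c - ctil) ^ 2 / c * (∫ x, w x ∂μ) + ctil * (4 * ∫ x, (ψ x / M) ^ 2 * w x ∂μ)) :=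
      hellingerSq_const_mul_perturbation_le hw hwint
        (hψm.aemeasurable.div_const M).aestronglyMeasurable hψM (hc₀.trans_le hc₀c) hctil
    _ = 2 * (c - ctil) ^ 2 / c ^ 2 + 8 * (ctil * ∫ x, ψ x ^ 2 * w x ∂μ) / M ^ 2 := by
      simp only [hc, div_pow, div_mul_eq_mul_div, integral_div]
      ring
    _ ≤ 2 * (C₁ ^ 2 * h / M ^ 2) / c₀ ^ 2 + 8 * (C₀ * (K * h)) / M ^ 2 := by gcongr
    _ = (2 * C₁ ^ 2 / c₀ ^ 2 + 8 * C₀ * K) * h / M ^ 2 := by ring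

end Perturbation

theorem intervalIntegral_eq_zero_of_forall_mem_Icc {b : ℝ → ℝ} {a r x : ℝ}
    (hb : ∀ y ∈ Set.Icc (a - r) (a + r), b y = 0) (hx : x ∈ Set.Icc (a - r) (a + r)) :
    ∫ y in a..x, b y = 0 := by
  have ha : a ∈ Set.Icc (a - r) (a + r) := by constructor <;> linarith [hx.1, hx.2]
  rw [intervalIntegral.integral_congr fun y hy => hb y (Set.uIcc_subset_Icc ha hx hy),
    intervalIntegral.integral_zero]

theorem setIntegral_exp_two_mul_primitive_of_eq_zero {b B : ℝ → ℝ} {a A h : ℝ} (hh : 0 ≤ h)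
    (hhA : h ≤ A) (hb : ∀ y ∈ Set.Icc (a - A) (a + A), b y = 0) (hB : ∀ x, B x = ∫ y in a..x, b y) :
    ∫ x in Set.Icc (a - h) (a + h), Real.exp (2 * B x) = 2 * h := by
  have subset : Set.Icc (a - h) (a + h) ⊆ Set.Icc (a - A) (a + A) :=
    Set.Icc_subset_Icc (sub_le_sub_left hhA a) (add_le_add_right hhA a)
  have exp_eq_one : Set.EqOn (fun x => Real.exp (2 * B x)) 1 (Set.Icc (a - h) (a + h)) :=
    fun x hx => by simp [hB, intervalIntegral_eq_zero_of_forall_mem_Icc hb (subset hx)]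
  rw [setIntegral_congr_fun measurableSet_Icc exp_eq_one]
  simp only [Pi.one_apply, setIntegral_const, smul_eq_mul, mul_one]
  rw [Real.volume_real_Icc_of_le (by linarith)]
  ring

/-- In the perturbed stationary densities setup, if the normalizing constants are
comparable (`c₀ ≤ c ≤ C₀`, `c̃ ≤ C₀`, `|c̃ − c| ≤ C₁ h / M`), then the squared Hellinger
distance between the two stationary densities is at most `C h / M²`, where `C` depends
only on `c₀`, `C₀`, `C₁`. -/
theorem stmt6
    (c₀ C₀ C₁ : ℝ) (hc₀ : 0 < c₀) (hC₀ : c₀ ≤ C₀) (hC₁ : 0 ≤ C₁) :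
    ∃ C : ℝ, 0 ≤ C ∧
      ∀ (xstar A h M : ℝ), 1 ≤ A → 0 < h → h ≤ 1 → 2 ≤ M →
      ∀ b : ℝ → ℝ, Measurable b →
        (∀ x ∈ Set.Icc (xstar - A) (xstar + A), b x = 0) →
      ∀ Bf : ℝ → ℝ, (∀ x, Bf x = ∫ y in xstar..x, b y) →
      ∀ c : ℝ, 0 < c →
        Integrable (fun x => Real.exp (2 * Bf x)) volume →
        (∫ x : ℝ, Real.exp (2 * Bf x) = 1 / c) →
      ∀ ψ : ℝ → ℝ, Measurable ψ →
        Function.support ψ ⊆ Set.Icc (xstar - h) (xstar + h) →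
        (∀ x, |ψ x| ≤ 1) → ψ xstar = 1 →
      ∀ ctil : ℝ, 0 < ctil →
        (1 / ctil = ∫ x : ℝ, (1 + ψ x / M)⁻¹ ^ 2 * Real.exp (2 * Bf x)) →
      c₀ ≤ c → c ≤ C₀ → ctil ≤ C₀ → |ctil - c| ≤ C₁ * h / M →
      ∫ x : ℝ, (Real.sqrt (c * Real.exp (2 * Bf x))
          - Real.sqrt (ctil * (1 + ψ x / M)⁻¹ ^ 2 * Real.exp (2 * Bf x))) ^ 2
        ≤ C * h / M ^ 2 := by
  refine ⟨2 * C₁ ^ 2 / c₀ ^ 2 + 8 * C₀ * 2, by have := hc₀.le.trans hC₀; positivity, ?_⟩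
  intro xstar A h M hA hh hh₁ hM b _ hb Bf hBf c _ hint hc ψ hψm hψS hψ _ ctil hctil _ hc₀c _
    hctilC₀ hdiff
  exact stmt6_general hc₀ hh.le hh₁ hM (.of_forall fun x => (Real.exp_pos _).le) hint hc
    (setIntegral_exp_two_mul_primitive_of_eq_zero hh.le (hh₁.trans hA) hb hBf).le
    hψm.aestronglyMeasurable hψS hψ hctil.le hc₀c hctilC₀ hdiff
end

section
/- Let k ≥ 1 be an integer, L ≥ 1, M ≥ 2, h ∈ (0, 1] and x* ∈ ℝ. Let ψ : ℝ → ℝ be k-times continuously differentiable with ‖ψ‖_∞ ≤ 1 and ‖ψ^{(j)}‖_∞ ≤ L for all 1 ≤ j ≤ k. Define F : ℝ → ℝ by F(x) = (1 + M^{−1} ψ((x − x*)/h))^{−2}. Then there exists a constant C depending only on k and L such that for every 1 ≤ j ≤ k, sup_{x ∈ ℝ} |F^{(j)}(x)| ≤ C / (M h^j). -/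
/-!
Write `F = g ∘ φ` with `g u = f (1 + M⁻¹ u)`, `f y = y⁻²` and `φ x = ψ ((x - x*) / h)`. A derivative
of `g` of order `i ≥ 1` is a derivative of `f` on the compact interval `[1/2, 3/2]` times
`M⁻ⁱ ≤ M⁻¹`, and the `i`-th derivative of `φ` is at most `L / hⁱ ≤ (L / h)ⁱ`. For `j ≥ 1` the value
of `g` itself, which is not small in `M⁻¹`, does not enter the Faà di Bruno formula, which therefore
bounds `F⁽ʲ⁾` by `j! (B / M) (L / h)ʲ` when `B` bounds the derivatives of `f` on `[1/2, 3/2]`.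
-/

open Set
open scoped Nat

section General

variable {𝕜 E F G : Type*} [NontriviallyNormedField 𝕜]
  [NormedAddCommGroup E] [NormedSpace 𝕜 E] [NormedAddCommGroup F] [NormedSpace 𝕜 F]
  [NormedAddCommGroup G] [NormedSpace 𝕜 G]

lemma iteratedFDerivWithin_sub_const_of_ne_zero {n : ℕ} (hn : n ≠ 0) {f : E → F} {s : Set E}
    {x : E} (hf : ContDiffWithinAt 𝕜 n f s x) (hs : UniqueDiffOn 𝕜 s) (hx : x ∈ s) (c : F) :
    iteratedFDerivWithin 𝕜 n (fun y => f y - c) s x = iteratedFDerivWithin 𝕜 n f s x := by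
  rw [fun_iteratedFDerivWithin_sub_apply hf contDiffWithinAt_const hs hx,
    iteratedFDerivWithin_const_of_ne hn, Pi.zero_apply, sub_zero]

lemma norm_iteratedFDerivWithin_comp_le_of_ne_zero {g : F → G} {f : E → F} {n : ℕ} (hn : n ≠ 0)
    {s : Set E} {t : Set F} {x : E} (hg : ContDiffOn 𝕜 n g t) (hf : ContDiffOn 𝕜 n f s)
    (ht : UniqueDiffOn 𝕜 t) (hs : UniqueDiffOn 𝕜 s) (hst : MapsTo f s t) (hx : x ∈ s) {C D : ℝ}
    (hC : ∀ i, 1 ≤ i → i ≤ n → ‖iteratedFDerivWithin 𝕜 i g t (f x)‖ ≤ C)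
    (hD : ∀ i, 1 ≤ i → i ≤ n → ‖iteratedFDerivWithin 𝕜 i f s x‖ ≤ D ^ i) :
    ‖iteratedFDerivWithin 𝕜 n (g ∘ f) s x‖ ≤ n ! * C * D ^ n := by
  -- Subtracting the constant `g (f x)` from `g` makes the order-zero bound trivial.
  have hC₀ : 0 ≤ C := (norm_nonneg _).trans (hC n (Nat.one_le_iff_ne_zero.2 hn) le_rfl)
  have hC' : ∀ i ≤ n, ‖iteratedFDerivWithin 𝕜 i (fun y => g y - g (f x)) t (f x)‖ ≤ C := by
    intro i hi
    rcases Nat.eq_zero_or_pos i with rfl | hi₀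
    · simpa using hC₀
    · rw [iteratedFDerivWithin_sub_const_of_ne_zero hi₀.ne'
        ((hg _ (hst hx)).of_le (mod_cast hi)) ht (hst hx)]
      exact hC i hi₀ hi
  rw [← iteratedFDerivWithin_sub_const_of_ne_zero hn (hg.comp hf hst x hx) hs hx (g (f x))]
  exact norm_iteratedFDerivWithin_comp_le (hg.sub contDiffOn_const) hf le_rfl ht hs hst hx hC' hD

lemma norm_iteratedDeriv_comp_le_of_ne_zero {g : 𝕜 → G} {f : 𝕜 → 𝕜} {n : ℕ} (hn : n ≠ 0)
    {t : Set 𝕜} (ht : IsOpen t) (hg : ContDiffOn 𝕜 n g t) (hf : ContDiff 𝕜 n f)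
    (hft : ∀ x, f x ∈ t) {x : 𝕜} {C D : ℝ}
    (hC : ∀ i, 1 ≤ i → i ≤ n → ‖iteratedDeriv i g (f x)‖ ≤ C)
    (hD : ∀ i, 1 ≤ i → i ≤ n → ‖iteratedDeriv i f x‖ ≤ D ^ i) :
    ‖iteratedDeriv n (g ∘ f) x‖ ≤ n ! * C * D ^ n := by
  simp only [← norm_iteratedFDeriv_eq_norm_iteratedDeriv] at hC hD ⊢
  rw [← iteratedFDerivWithin_univ]
  refine norm_iteratedFDerivWithin_comp_le_of_ne_zero hn hg hf.contDiffOn ht.uniqueDiffOn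
    uniqueDiffOn_univ (fun y _ => hft y) (mem_univ x) (fun i hi hin => ?_) (fun i hi hin => ?_)
  · rw [iteratedFDerivWithin_of_isOpen i ht (hft x)]
    exact hC i hi hin
  · rw [iteratedFDerivWithin_univ]
    exact hD i hi hin

lemma iteratedDeriv_comp_mul_left (n : ℕ) (f : 𝕜 → G) (a x : 𝕜) :
    iteratedDeriv n (fun y => f (a * y)) x = a ^ n • iteratedDeriv n f (a * x) := by
  induction n generalizing x with
  | zero => simp
  | succ n ih =>
    simp only [iteratedDeriv_succ, funext ih]
    rw [deriv_fun_const_smul_field, deriv_comp_mul_left, smul_smul, pow_succ]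

lemma iteratedDeriv_comp_const_add_mul (n : ℕ) (f : 𝕜 → G) (c a x : 𝕜) :
    iteratedDeriv n (fun y => f (c + a * y)) x = a ^ n • iteratedDeriv n f (c + a * x) := by
  rw [iteratedDeriv_comp_mul_left n (fun y => f (c + y)), iteratedDeriv_comp_const_add]

lemma iteratedDeriv_comp_sub_div (n : ℕ) (f : 𝕜 → G) (b h x : 𝕜) :
    iteratedDeriv n (fun y => f ((y - b) / h)) x
      = h⁻¹ ^ n • iteratedDeriv n f ((x - b) / h) := by
  simp only [div_eq_inv_mul]
  simp only [iteratedDeriv_comp_sub_const n (fun y => f (h⁻¹ * y)) b, iteratedDeriv_comp_mul_left]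

lemma norm_iteratedDeriv_comp_const_add_mul_le {f : 𝕜 → G} {w : 𝕜 → 𝕜} {n : ℕ} (hn : n ≠ 0)
    {t : Set 𝕜} (ht : IsOpen t) (hf : ContDiffOn 𝕜 n f t) (hw : ContDiff 𝕜 n w) {c ε : 𝕜}
    (hε : ‖ε‖ ≤ 1) (hwt : ∀ x, c + ε * w x ∈ t) {x : 𝕜} {B D : ℝ}
    (hB : ∀ i, 1 ≤ i → i ≤ n → ‖iteratedDeriv i f (c + ε * w x)‖ ≤ B)
    (hD : ∀ i, 1 ≤ i → i ≤ n → ‖iteratedDeriv i w x‖ ≤ D ^ i) :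
    ‖iteratedDeriv n (fun y => f (c + ε * w y)) x‖ ≤ n ! * (‖ε‖ * B) * D ^ n := by
  have haff : ContDiff 𝕜 n fun u : 𝕜 => c + ε * u :=
    contDiff_const.add (contDiff_const.mul contDiff_id)
  refine norm_iteratedDeriv_comp_le_of_ne_zero hn (ht.preimage haff.continuous)
    (hf.comp haff.contDiffOn (mapsTo_preimage _ _)) hw hwt (fun i hi hin => ?_) hD
  calc ‖iteratedDeriv i (fun u => f (c + ε * u)) (w x)‖
      = ‖ε‖ ^ i * ‖iteratedDeriv i f (c + ε * w x)‖ := by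
        rw [iteratedDeriv_comp_const_add_mul, norm_smul, norm_pow]
    _ ≤ ‖ε‖ * B := by
        gcongr
        · exact pow_le_of_le_one (norm_nonneg ε) hε (Nat.one_le_iff_ne_zero.1 hi)
        · exact hB i hi hin

lemma exists_norm_iteratedDeriv_le_of_isCompact {f : 𝕜 → G} {n : ℕ} {K t : Set 𝕜}
    (hK : IsCompact K) (ht : IsOpen t) (hKt : K ⊆ t) (hf : ContDiffOn 𝕜 n f t) :
    ∃ B, 0 ≤ B ∧ ∀ i ≤ n, ∀ y ∈ K, ‖iteratedDeriv i f y‖ ≤ B := by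
  have hcont : ∀ i ≤ n, ContinuousOn (iteratedDeriv i f) K := fun i hi =>
    ((hf.continuousOn_iteratedDerivWithin (mod_cast hi) ht.uniqueDiffOn).congr
      fun y hy => (iteratedDerivWithin_of_isOpen ht hy).symm).mono hKt
  choose! b hb using fun i hi => hK.exists_bound_of_continuousOn (hcont i hi)
  refine ⟨∑ i ∈ Finset.range (n + 1), |b i|, by positivity, fun i hi y hy => ?_⟩
  calc ‖iteratedDeriv i f y‖ ≤ |b i| := (hb i hi y hy).trans (le_abs_self _)
    _ ≤ ∑ i ∈ Finset.range (n + 1), |b i| :=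
      Finset.single_le_sum (f := fun i => |b i|) (fun _ _ => abs_nonneg _)
        (Finset.mem_range_succ_iff.2 hi)

end General

lemma one_add_mul_mem_Icc {ε p : ℝ} (hε : |ε| ≤ 1 / 2) (hp : |p| ≤ 1) :
    1 + ε * p ∈ Icc (1 / 2 : ℝ) (3 / 2) := by
  have hεp : |ε * p| ≤ 1 / 2 := by
    rw [abs_mul]
    nlinarith [abs_nonneg ε, abs_nonneg p]
  constructor <;> linarith [(abs_le.1 hεp).1, (abs_le.1 hεp).2]

theorem stmt15_general {G : Type*} [NormedAddCommGroup G] [NormedSpace ℝ G] {f : ℝ → G}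
    {t : Set ℝ} (ht : IsOpen t) (hIt : Icc (1 / 2) (3 / 2) ⊆ t) (k : ℕ)
    (hf : ContDiffOn ℝ k f t) (L : ℝ) :
    ∃ C : ℝ, 0 ≤ C ∧
      ∀ (M h xstar : ℝ), 2 ≤ M → 0 < h →
        ∀ ψ : ℝ → ℝ, ContDiff ℝ k ψ → (∀ x, |ψ x| ≤ 1) →
          (∀ j : ℕ, 1 ≤ j → j ≤ k → ∀ x, |iteratedDeriv j ψ x| ≤ L) →
          ∀ j : ℕ, 1 ≤ j → j ≤ k → ∀ x : ℝ,
            ‖iteratedDeriv j (fun x => f (1 + M⁻¹ * ψ ((x - xstar) / h))) x‖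
              ≤ C / (M * h ^ j) := by
  obtain ⟨B, hB₀, hB⟩ := exists_norm_iteratedDeriv_le_of_isCompact isCompact_Icc ht hIt hf
  set D := max 1 L
  have hD : 1 ≤ D := le_max_left 1 L
  refine ⟨k ! * B * D ^ k, by positivity, fun M h xstar hM hh ψ hψ hψ₁ hψL j hj hjk x => ?_⟩
  have hjk' : (j : WithTop ℕ∞) ≤ k := mod_cast hjk
  have hMinv : |M⁻¹| ≤ 1 / 2 := by
    rw [abs_of_pos (by positivity), one_div]
    exact inv_anti₀ two_pos hM
  have hmem (y : ℝ) : 1 + M⁻¹ * ψ ((y - xstar) / h) ∈ Icc (1 / 2 : ℝ) (3 / 2) :=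
    one_add_mul_mem_Icc hMinv (hψ₁ _)
  have hφ : ∀ i, 1 ≤ i → i ≤ j →
      ‖iteratedDeriv i (fun y => ψ ((y - xstar) / h)) x‖ ≤ (h⁻¹ * D) ^ i := by
    intro i hi hij
    have hψi : |iteratedDeriv i ψ ((x - xstar) / h)| ≤ D ^ i :=
      calc _ ≤ L := hψL i hi (hij.trans hjk) _
        _ ≤ D := le_max_right 1 L
        _ ≤ D ^ i := le_self_pow₀ hD (Nat.one_le_iff_ne_zero.1 hi)
    rw [iteratedDeriv_comp_sub_div, norm_smul, norm_pow, Real.norm_of_nonneg (by positivity),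
      mul_pow]
    gcongr
    exact hψi
  calc ‖iteratedDeriv j (fun x => f (1 + M⁻¹ * ψ ((x - xstar) / h))) x‖
      ≤ j ! * (‖M⁻¹‖ * B) * (h⁻¹ * D) ^ j :=
        norm_iteratedDeriv_comp_const_add_mul_le (Nat.one_le_iff_ne_zero.1 hj) ht
          (hf.of_le hjk') ((hψ.of_le hjk').comp (by fun_prop)) (hMinv.trans (by norm_num))
          (fun y => hIt (hmem y)) (fun i _ hij => hB i (hij.trans hjk) _ (hmem x)) hφ
    _ = j ! * B * D ^ j / (M * h ^ j) := by
        rw [Real.norm_of_nonneg (by positivity), mul_pow, inv_pow]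
        field_simp
    _ ≤ k ! * B * D ^ k / (M * h ^ j) := by gcongr

/-- Derivative bounds for the perturbation factor `F(x) = (1 + M⁻¹ ψ((x−x*)/h))⁻²`
appearing in the perturbed invariant density: for `1 ≤ j ≤ k`,
`sup_x |F^{(j)}(x)| ≤ C / (M h^j)` with `C` depending only on `k` and `L`. -/
theorem stmt15 (k : ℕ) (hk : 1 ≤ k) (L : ℝ) (hL : 1 ≤ L) :
    ∃ C : ℝ, 0 ≤ C ∧
      ∀ (M h xstar : ℝ), 2 ≤ M → 0 < h → h ≤ 1 →
        ∀ ψ : ℝ → ℝ, ContDiff ℝ k ψ → (∀ x, |ψ x| ≤ 1) →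
          (∀ j : ℕ, 1 ≤ j → j ≤ k → ∀ x, |iteratedDeriv j ψ x| ≤ L) →
          ∀ j : ℕ, 1 ≤ j → j ≤ k → ∀ x : ℝ,
            |iteratedDeriv j (fun x => ((1 + M⁻¹ * ψ ((x - xstar) / h)) ^ 2)⁻¹) x|
              ≤ C / (M * h ^ j) := by
  have hf : ContDiffOn ℝ k (fun y : ℝ => (y ^ 2)⁻¹) (Ioi 0) :=
    (contDiffOn_id.pow 2).inv fun y hy => pow_ne_zero 2 (ne_of_gt hy)
  have hI : Icc (1 / 2 : ℝ) (3 / 2) ⊆ Ioi 0 := fun y hy => one_half_pos.trans_le hy.1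
  obtain ⟨C, hC₀, hC⟩ := stmt15_general isOpen_Ioi hI k hf L
  exact ⟨C, hC₀, fun M h xstar hM hh _ => hC M h xstar hM hh⟩
end
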